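/- Let G(x) = C_0 + C_1 x + C_2 x² + C_3 x³ be a cubic cost function with C_3 > 0, let g, μ ∈ ℝ, φ ≠ 0, η > 0, and for σ ≥ 0 define θ(σ) = (1/η)·∫ G'(g + φx) d(gaussianReal μ (σ²))(x), where G'(x) = C_1 + 2C_2 x + 3C_3 x². Then θ is strictly increasing in the net-load uncertainty: for all 0 ≤ σ₁ < σ₂, θ(σ₁) < θ(σ₂). (Proposition 3, super-quadratic case: the storage opportunity price increases with net-load uncertainty.) -/

import Mathlib

/-!
The first two moments of a Gaussian are `μ` and `v + μ ^ 2`, so for a quadratic marginal cost `G'`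
the expectation of `G' (g + φ x)` is explicit, and it depends on the variance only through the
term `3 * C₃ * φ ^ 2 * v`. With `v = σ ^ 2`, `C₃ > 0` and `φ ≠ 0` this term is strictly increasing
in `σ ≥ 0`.
-/

open MeasureTheory ProbabilityTheory

lemma integrable_sq_gaussianReal (μ : ℝ) (v : NNReal) :
    Integrable (fun x : ℝ => x ^ 2) (gaussianReal μ v) :=
  (memLp_id_gaussianReal 2).integrable_sq

lemma integral_sq_gaussianReal (μ : ℝ) (v : NNReal) :
    ∫ x, x ^ 2 ∂(gaussianReal μ v) = v + μ ^ 2 := by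
  have h := variance_eq_sub (memLp_id_gaussianReal (μ := μ) (v := v) 2)
  simp only [variance_id_gaussianReal, Pi.pow_apply, id_eq, integral_id_gaussianReal] at h
  linarith

lemma integral_quadratic_gaussianReal (a b c μ : ℝ) (v : NNReal) :
    ∫ x, (a + b * x + c * x ^ 2) ∂(gaussianReal μ v) = a + b * μ + c * (v + μ ^ 2) := by
  have h1 : Integrable (fun x : ℝ => x) (gaussianReal μ v) :=
    (memLp_id_gaussianReal 1).integrable le_rfl
  have h2 := integrable_sq_gaussianReal μ v
  have h3 : Integrable (fun x : ℝ => a + b * x) (gaussianReal μ v) :=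
    (integrable_const a).add (h1.const_mul b)
  rw [integral_add h3 (h2.const_mul c),
    integral_add (integrable_const a) (h1.const_mul b), integral_const_mul, integral_const_mul,
    integral_sq_gaussianReal, integral_id_gaussianReal]
  simp

/-- Proposition 3 (super-quadratic case): for cubic cost with `C₃ > 0`, the
opportunity price `θ(σ) = (1/η)·∫ G'(g + φx) d(gaussianReal μ σ²)(x)` is
strictly increasing in the net-load uncertainty `σ`. -/
theorem opportunity_price_strictly_increasing_in_uncertainty
    (C₀ C₁ C₂ C₃ : ℝ) (hC₃ : 0 < C₃) (g μ φ η : ℝ) (hφ : φ ≠ 0) (hη : 0 < η)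
    (G G' : ℝ → ℝ)
    (hG : ∀ x, G x = C₀ + C₁ * x + C₂ * x ^ 2 + C₃ * x ^ 3)
    (hG' : ∀ x, G' x = C₁ + 2 * C₂ * x + 3 * C₃ * x ^ 2)
    (θ : ℝ → ℝ)
    (hθ : ∀ σ : ℝ, θ σ =
      (1 / η) * ∫ x, G' (g + φ * x) ∂(gaussianReal μ ⟨σ ^ 2, sq_nonneg σ⟩)) :
    ∀ σ₁ σ₂ : ℝ, 0 ≤ σ₁ → σ₁ < σ₂ → θ σ₁ < θ σ₂ := by
  intro σ₁ σ₂ h0 h12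
  have key : ∀ σ : ℝ, θ σ = (1 / η) * ((C₁ + 2 * C₂ * g + 3 * C₃ * g ^ 2)
      + (2 * C₂ * φ + 6 * C₃ * g * φ) * μ + 3 * C₃ * φ ^ 2 * (σ ^ 2 + μ ^ 2)) := by
    intro σ
    have h := integral_quadratic_gaussianReal (C₁ + 2 * C₂ * g + 3 * C₃ * g ^ 2)
      (2 * C₂ * φ + 6 * C₃ * g * φ) (3 * C₃ * φ ^ 2) μ ⟨σ ^ 2, sq_nonneg σ⟩
    -- The coercion of `⟨σ ^ 2, _⟩ : NNReal` to `ℝ` in `h` is `σ ^ 2` definitionally.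
    refine (hθ σ).trans (congrArg (1 / η * ·) (Eq.trans ?_ h))
    congr 1
    funext x
    rw [hG']
    ring
  rw [key, key]
  have hsq : σ₁ ^ 2 < σ₂ ^ 2 := by gcongr
  gcongr
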